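/- Fix T > 0 and (t,x) ∈ [0,T]×ℝ^d. Let b : ℝ^d → ℝ^d, ū : [0,T]×ℝ^d → ℝ^d and σ : ℝ^d → ℝ^{d×d} be continuous, with a(y) = σ(y)σ(y)ᵀ symmetric positive definite for every y, and let h : ℝ^d → ℝ. Suppose v₀ : [0,T]×ℝ^d → ℝ is of class C^{1,2} and satisfies ∂_t v₀(s,y) + ⟨b(y) − σ(y)ū(s,y), ∇_x v₀(s,y)⟩ − (1/2)‖σ(y)ᵀ∇_x v₀(s,y)‖² − ‖ū(s,y)‖² = 0 on [0,T)×ℝ^d with v₀(T,y) = 2h(y). Then for every absolutely continuous path φ : [t,T] → ℝ^d with φ(t) = x and square-integrable derivative, v₀(t,x) ≤ ∫_t^T [ (1/2)‖φ̇(s) − (b(φ(s)) − σ(φ(s))ū(s,φ(s)))‖²_{a^{-1}(φ(s))} − ‖ū(s,φ(s))‖² ] ds + 2h(φ(T)). -/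

import Mathlib

open Real Filter MeasureTheory Matrix intervalIntegral Set
open scoped BigOperators

noncomputable section

/-- Partial derivative of `f : ℝ^d → ℝ` in the `i`-th coordinate direction. -/
noncomputable def pder {d : ℕ} (i : Fin d) (f : (Fin d → ℝ) → ℝ) (x : Fin d → ℝ) : ℝ :=
  fderiv ℝ f x (Pi.single i 1)

/-- Spatial gradient `∇_x f`. -/
noncomputable def gradv {d : ℕ} (f : (Fin d → ℝ) → ℝ) (x : Fin d → ℝ) : Fin d → ℝ :=
  fun i => pder i f x

/-- Spatial Hessian `∇²_x f`. -/
noncomputable def hessm {d : ℕ} (f : (Fin d → ℝ) → ℝ) (x : Fin d → ℝ) :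
    Matrix (Fin d) (Fin d) ℝ :=
  Matrix.of fun i j => pder i (fun y => pder j f y) x

/-- Euclidean inner product on `ℝ^d`. -/
def dotp {d : ℕ} (u v : Fin d → ℝ) : ℝ := ∑ i, u i * v i

/-- Matrix contraction `A : B = ∑_{i,j} A_{ij} B_{ij}`. -/
def mdot {d : ℕ} (A B : Matrix (Fin d) (Fin d) ℝ) : ℝ := ∑ i, ∑ j, A i j * B i j

/-- `f(t,x)` is of class `C^{1,2}` on `ℝ × ℝ^d`: continuous, continuously
differentiable in `t` and twice continuously differentiable in `x`. -/
def C12 {d : ℕ} (f : ℝ → (Fin d → ℝ) → ℝ) : Prop :=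
  Continuous (fun p : ℝ × (Fin d → ℝ) => f p.1 p.2) ∧
  (∀ x, Differentiable ℝ (fun s => f s x)) ∧
  Continuous (fun p : ℝ × (Fin d → ℝ) => deriv (fun s => f s p.2) p.1) ∧
  (∀ t, ContDiff ℝ 2 (f t)) ∧
  (∀ i, Continuous (fun p : ℝ × (Fin d → ℝ) => pder i (f p.1) p.2)) ∧
  (∀ i j, Continuous (fun p : ℝ × (Fin d → ℝ) => hessm (f p.1) p.2 i j))

/-- `f(t,x)` is of class `C^1` on `ℝ × ℝ^d`. -/
def C1 {d : ℕ} (f : ℝ → (Fin d → ℝ) → ℝ) : Prop :=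
  Continuous (fun p : ℝ × (Fin d → ℝ) => f p.1 p.2) ∧
  (∀ x, Differentiable ℝ (fun s => f s x)) ∧
  Continuous (fun p : ℝ × (Fin d → ℝ) => deriv (fun s => f s p.2) p.1) ∧
  (∀ t, Differentiable ℝ (f t)) ∧
  (∀ i, Continuous (fun p : ℝ × (Fin d → ℝ) => pder i (f p.1) p.2))

/-!
Along an absolutely continuous path `φ`, the function `s ↦ v₀ s (φ s)` is absolutely continuous,
because a `C¹` function is locally Lipschitz. Its a.e. derivative is `∂ₜv₀ + ⟨φ̇, ∇v₀⟩`, where the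
Hamilton–Jacobi equation says `∂ₜv₀ = H(∇v₀)` and the Fenchel–Young inequality for the quadratic
form `a` gives `⟨φ̇, ∇v₀⟩ ≥ -L(φ̇) - H(∇v₀)`. Hence the derivative is at least `-L(φ̇)`, and
integrating from `t` to `T` gives the bound.
-/

section AbsolutelyContinuous

variable {X Y : Type*} [PseudoMetricSpace X] [PseudoMetricSpace Y] {a b : ℝ}

lemma absolutelyContinuousOnInterval_of_dist_le_mul {f : ℝ → X} {g : ℝ → Y} {K : ℝ}
    (hg : AbsolutelyContinuousOnInterval g a b)
    (hfg : ∀ r ∈ uIcc a b, ∀ s ∈ uIcc a b, dist (f r) (f s) ≤ K * dist (g r) (g s)) :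
    AbsolutelyContinuousOnInterval f a b := by
  refine squeeze_zero' (.of_forall fun E ↦ Finset.sum_nonneg fun _ _ ↦ dist_nonneg) ?_
    (by simpa using Tendsto.const_mul K hg)
  rw [eventually_inf_principal]
  filter_upwards with E hE
  rw [Finset.mul_sum]
  exact Finset.sum_le_sum fun i hi ↦ hfg _ (hE.1 i hi).1 _ (hE.1 i hi).2

lemma absolutelyContinuousOnInterval_prodMk {f : ℝ → X} {g : ℝ → Y}
    (hf : AbsolutelyContinuousOnInterval f a b) (hg : AbsolutelyContinuousOnInterval g a b) :
    AbsolutelyContinuousOnInterval (fun s ↦ (f s, g s)) a b := by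
  refine squeeze_zero (fun E ↦ Finset.sum_nonneg fun _ _ ↦ dist_nonneg) (fun E ↦ ?_)
    (by simpa only [add_zero] using Tendsto.add hf hg)
  rw [← Finset.sum_add_distrib]
  exact Finset.sum_le_sum fun i _ ↦ by
    rw [Prod.dist_eq]; exact max_le_add_of_nonneg dist_nonneg dist_nonneg

lemma absolutelyContinuousOnInterval_comp_of_locallyLipschitz {E : Type*}
    [SeminormedAddCommGroup E] {f : E → Y} {ψ : ℝ → E} (hf : LocallyLipschitz f)
    (hψ : AbsolutelyContinuousOnInterval ψ a b) :
    AbsolutelyContinuousOnInterval (fun s ↦ f (ψ s)) a b := by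
  obtain ⟨K, hK⟩ := (hf.locallyLipschitzOn (s := ψ '' uIcc a b)).exists_lipschitzOnWith_of_compact
    (isCompact_uIcc.image_of_continuousOn hψ.continuousOn)
  exact absolutelyContinuousOnInterval_of_dist_le_mul hψ fun r hr s hs ↦
    hK.dist_le_mul _ (mem_image_of_mem ψ hr) _ (mem_image_of_mem ψ hs)

lemma le_integral_add_of_ae_neg_deriv_le {g L : ℝ → ℝ} (hab : a ≤ b)
    (hg : AbsolutelyContinuousOnInterval g a b) (hL : IntervalIntegrable L volume a b)
    (hgL : ∀ᵐ s, s ∈ Ioo a b → -deriv g s ≤ L s) :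
    g a ≤ (∫ s in a..b, L s) + g b := by
  have hmono : ∫ s in a..b, -deriv g s ≤ ∫ s in a..b, L s := by
    refine integral_mono_ae_restrict hab hg.intervalIntegrable_deriv.neg hL ?_
    rw [← restrict_Ioo_eq_restrict_Icc]
    exact (ae_restrict_iff' measurableSet_Ioo).2 hgL
  rw [intervalIntegral.integral_neg, hg.integral_deriv_eq_sub] at hmono
  linarith

end AbsolutelyContinuous

section Primitive

variable {E : Type*} [NormedAddCommGroup E] [NormedSpace ℝ E] {φ φ' : ℝ → E} {a b : ℝ}

lemma absolutelyContinuousOnInterval_of_eq_add_integral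
    (hφ' : IntervalIntegrable φ' volume a b)
    (hφ : ∀ s ∈ uIcc a b, φ s = φ a + ∫ r in a..s, φ' r) :
    AbsolutelyContinuousOnInterval φ a b := by
  have hint {r s : ℝ} (hr : r ∈ uIcc a b) (hs : s ∈ uIcc a b) :
      IntervalIntegrable φ' volume r s := hφ'.mono_set (uIcc_subset_uIcc hr hs)
  refine absolutelyContinuousOnInterval_of_dist_le_mul (K := 1)
    (hφ'.norm.absolutelyContinuousOnInterval_intervalIntegral left_mem_uIcc) fun r hr s hs ↦ ?_
  have har := hint left_mem_uIcc hr
  have has := hint left_mem_uIcc hs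
  rw [one_mul, hφ r hr, hφ s hs, dist_add_left, dist_eq_norm, Real.dist_eq,
    integral_interval_sub_left har has, integral_interval_sub_left har.norm has.norm]
  exact norm_integral_le_abs_integral_norm

lemma ae_hasDerivAt_of_eq_add_integral [CompleteSpace E]
    (hφ' : IntervalIntegrable φ' volume a b)
    (hφ : ∀ s ∈ uIcc a b, φ s = φ a + ∫ r in a..s, φ' r) :
    ∀ᵐ s, s ∈ Ioo a b → HasDerivAt φ (φ' s) s := by
  filter_upwards [hφ'.ae_hasDerivAt_integral] with s hderiv hs
  refine ((hderiv (Icc_subset_uIcc (Ioo_subset_Icc_self hs)) a left_mem_uIcc).const_add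
    (φ a)).congr_of_eventuallyEq ?_
  filter_upwards [isOpen_Ioo.mem_nhds hs] with r hr
  exact hφ r (Icc_subset_uIcc (Ioo_subset_Icc_self hr))

end Primitive

lemma dotp_eq_dotProduct {d : ℕ} (u v : Fin d → ℝ) : dotp u v = u ⬝ᵥ v := rfl

lemma fderiv_eq_dotProduct_gradv {d : ℕ} (f : (Fin d → ℝ) → ℝ) (x w : Fin d → ℝ) :
    fderiv ℝ f x w = w ⬝ᵥ gradv f x := by
  conv_lhs => rw [pi_eq_sum_univ' w, map_sum]
  simp only [map_smul, smul_eq_mul]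
  rfl

lemma C12.c1 {d : ℕ} {v : ℝ → (Fin d → ℝ) → ℝ} (hv : C12 v) : C1 v := by
  obtain ⟨hcont, htime, htimec, hspace, hspacec, -⟩ := hv
  exact ⟨hcont, htime, htimec, fun s ↦ (hspace s).differentiable two_ne_zero, hspacec⟩

namespace C1

variable {d : ℕ} {v : ℝ → (Fin d → ℝ) → ℝ}

lemma continuous_fderiv (hv : C1 v) :
    Continuous fun p : ℝ × (Fin d → ℝ) ↦ fderiv ℝ (v p.1) p.2 := by
  obtain ⟨-, -, -, -, hspacec⟩ := hv
  refine continuous_clm_apply.2 fun w ↦ ?_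
  simp only [fderiv_eq_dotProduct_gradv]
  exact continuous_const.dotProduct (continuous_pi hspacec)

lemma continuous_toSpanSingleton_deriv (hv : C1 v) :
    Continuous fun p : ℝ × (Fin d → ℝ) ↦
      ContinuousLinearMap.toSpanSingleton ℝ (deriv (fun r ↦ v r p.2) p.1) := by
  obtain ⟨-, -, htimec, -, -⟩ := hv
  exact (ContinuousLinearMap.toSpanSingletonCLE (𝕜 := ℝ) (E := ℝ)).continuous.comp htimec

lemma hasFDerivAt_uncurry (hv : C1 v) (s : ℝ) (y : Fin d → ℝ) :
    HasFDerivAt (Function.uncurry v)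
      ((ContinuousLinearMap.toSpanSingleton ℝ (deriv (fun r ↦ v r y) s)).coprod
        (fderiv ℝ (v s) y)) (s, y) := by
  obtain ⟨-, htime, -, hspace, -⟩ := id hv
  exact (hasStrictFDerivAt_uncurry_coprod (u := (s, y))
    (f₁ := fun s y ↦ ContinuousLinearMap.toSpanSingleton ℝ (deriv (fun r ↦ v r y) s))
    (f₂ := fun s y ↦ fderiv ℝ (v s) y)
    (.of_forall fun p ↦ (htime p.2 p.1).hasDerivAt.hasFDerivAt)
    (.of_forall fun p ↦ (hspace p.1 p.2).hasFDerivAt)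
    hv.continuous_toSpanSingleton_deriv.continuousAt
    hv.continuous_fderiv.continuousAt).hasFDerivAt

lemma contDiff_uncurry (hv : C1 v) : ContDiff ℝ 1 (Function.uncurry v) := by
  refine contDiff_one_iff_hasFDerivAt.2 ⟨_, ?_, fun p ↦ hv.hasFDerivAt_uncurry p.1 p.2⟩
  exact (ContinuousLinearMap.coprodEquivL (S := ℝ)).continuous.comp
    (hv.continuous_toSpanSingleton_deriv.prodMk hv.continuous_fderiv)

lemma hasDerivAt_comp_path (hv : C1 v) {φ : ℝ → (Fin d → ℝ)} {w : Fin d → ℝ} {s : ℝ}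
    (hφ : HasDerivAt φ w s) :
    HasDerivAt (fun r ↦ v r (φ r)) (deriv (fun r ↦ v r (φ s)) s + w ⬝ᵥ gradv (v s) (φ s)) s := by
  have hchain := (hv.hasFDerivAt_uncurry s (φ s)).comp_hasDerivAt s ((hasDerivAt_id s).prodMk hφ)
  simp only [ContinuousLinearMap.coprod_apply, ContinuousLinearMap.toSpanSingleton_apply,
    one_smul, fderiv_eq_dotProduct_gradv] at hchain
  exact hchain

lemma absolutelyContinuousOnInterval_comp_path (hv : C1 v) {φ : ℝ → (Fin d → ℝ)} {a b : ℝ}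
    (hφ : AbsolutelyContinuousOnInterval φ a b) :
    AbsolutelyContinuousOnInterval (fun s ↦ v s (φ s)) a b := by
  have hid : AbsolutelyContinuousOnInterval (fun s : ℝ ↦ s) a b :=
    contDiff_id.contDiffOn.absolutelyContinuousOnInterval
  exact absolutelyContinuousOnInterval_comp_of_locallyLipschitz (f := Function.uncurry v)
    (ψ := fun s ↦ (s, φ s)) hv.contDiff_uncurry.locallyLipschitz
    (absolutelyContinuousOnInterval_prodMk hid hφ)

end C1

section SquareIntegrable

variable {m n Ω : Type*} [Fintype m] [Fintype n] [MeasurableSpace Ω] {μ : Measure Ω}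

lemma memLp_two_apply_of_integrable_dotProduct_self {f : Ω → n → ℝ}
    (hf : AEStronglyMeasurable f μ) (hff : Integrable (fun ω ↦ f ω ⬝ᵥ f ω) μ) (i : n) :
    MemLp (fun ω ↦ f ω i) 2 μ := by
  have hfi : AEStronglyMeasurable (fun ω ↦ f ω i) μ :=
    (continuous_apply i).comp_aestronglyMeasurable hf
  refine (memLp_two_iff_integrable_sq hfi).2 (hff.mono' (hfi.pow 2) (.of_forall fun ω ↦ ?_))
  rw [Real.norm_of_nonneg (sq_nonneg _), sq]
  exact Finset.single_le_sum (f := fun j ↦ f ω j * f ω j) (fun j _ ↦ mul_self_nonneg _)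
    (Finset.mem_univ i)

lemma integrable_dotProduct_mulVec {p : Ω → m → ℝ} {A : Ω → Matrix m n ℝ} {q : Ω → n → ℝ}
    (hp : ∀ i, MemLp (fun ω ↦ p ω i) 2 μ) (hA : ∀ i j, MemLp (fun ω ↦ A ω i j) ⊤ μ)
    (hq : ∀ j, MemLp (fun ω ↦ q ω j) 2 μ) :
    Integrable (fun ω ↦ p ω ⬝ᵥ A ω *ᵥ q ω) μ := by
  have hAq (i : m) : MemLp (fun ω ↦ (A ω *ᵥ q ω) i) 2 μ :=
    memLp_finsetSum _ fun j _ ↦ (hq j).mul' (hA i j)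
  exact integrable_finsetSum _ fun i _ ↦ (hp i).integrable_mul (hAq i)

end SquareIntegrable

lemma memLp_restrict_uIoc_of_continuousOn {E : Type*} [NormedAddCommGroup E] {f : ℝ → E}
    {a b : ℝ} (hf : ContinuousOn f (uIcc a b)) (p : ENNReal) :
    MemLp f p (volume.restrict (uIoc a b)) := by
  obtain ⟨C, hC⟩ := isCompact_uIcc.exists_bound_of_continuousOn hf
  have hfinite : IsFiniteMeasure (volume.restrict (uIoc a b)) := by
    rw [uIoc]; infer_instance
  exact .of_bound ((hf.mono uIoc_subset_uIcc).aestronglyMeasurable measurableSet_uIoc) C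
    ((ae_restrict_iff' measurableSet_uIoc).2 (.of_forall fun s hs ↦ hC s (uIoc_subset_uIcc hs)))

section FenchelYoung

variable {n : Type*} [Fintype n]

lemma neg_dotProduct_le_of_posDef [DecidableEq n] {A : Matrix n n ℝ} (hA : A.PosDef)
    (p q : n → ℝ) :
    -(q ⬝ᵥ p) ≤ 1 / 2 * (q ⬝ᵥ A⁻¹ *ᵥ q) + 1 / 2 * (p ⬝ᵥ A *ᵥ p) := by
  have hAz : A *ᵥ (A⁻¹ *ᵥ q) = q := by
    rw [mulVec_mulVec, mul_nonsing_inv _ hA.det_pos.ne'.isUnit, one_mulVec]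
  have hzA : (A⁻¹ *ᵥ q) ⬝ᵥ (A *ᵥ p) = q ⬝ᵥ p := by
    have hAsymm : Aᵀ = A := hA.isHermitian
    rw [dotProduct_mulVec, ← mulVec_transpose, hAsymm, hAz]
  have hsq : 0 ≤ (A⁻¹ *ᵥ q + p) ⬝ᵥ (A *ᵥ (A⁻¹ *ᵥ q + p)) :=
    hA.posSemidef.dotProduct_mulVec_nonneg _
  rw [mulVec_add, hAz, add_dotProduct, dotProduct_add, dotProduct_add, hzA,
    dotProduct_comm _ q, dotProduct_comm p q] at hsq
  linarith

/-- The cost per unit time of moving with velocity `w` where the drift is `β`, the diffusion matrix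
is `a` and the running reward is `c`: `½‖w - β‖²_{a⁻¹} - c`. -/
def lagrangian [DecidableEq n] (β : n → ℝ) (a : Matrix n n ℝ) (c : ℝ) (w : n → ℝ) : ℝ :=
  1 / 2 * ((w - β) ⬝ᵥ a⁻¹ *ᵥ (w - β)) - c

/-- The Hamiltonian `½‖p‖²_a - ⟨β, p⟩ + c`, the Legendre dual of `lagrangian β a c` for the pairing
`-⟨w, p⟩`, so that the Hamilton–Jacobi equation for the least cost reads `∂ₜ v = H(∇v)`. -/
def hamiltonian (β : n → ℝ) (a : Matrix n n ℝ) (c : ℝ) (p : n → ℝ) : ℝ :=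
  1 / 2 * (p ⬝ᵥ a *ᵥ p) - β ⬝ᵥ p + c

lemma hamiltonian_mul_transpose {m : Type*} [Fintype m] (β : n → ℝ) (σ : Matrix n m ℝ) (c : ℝ)
    (p : n → ℝ) :
    hamiltonian β (σ * σᵀ) c p = 1 / 2 * ((σᵀ *ᵥ p) ⬝ᵥ (σᵀ *ᵥ p)) - β ⬝ᵥ p + c := by
  rw [hamiltonian, ← mulVec_mulVec, dotProduct_mulVec, mulVec_transpose]

lemma neg_dotProduct_le_lagrangian_add_hamiltonian [DecidableEq n] {a : Matrix n n ℝ}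
    (ha : a.PosDef) (β : n → ℝ) (c : ℝ) (w p : n → ℝ) :
    -(w ⬝ᵥ p) ≤ lagrangian β a c w + hamiltonian β a c p := by
  have hyoung := neg_dotProduct_le_of_posDef ha p (w - β)
  rw [sub_dotProduct] at hyoung
  unfold lagrangian hamiltonian
  linarith

end FenchelYoung

lemma continuousOn_matrix_inv {n α : Type*} [Fintype n] [DecidableEq n] [TopologicalSpace α]
    {A : α → Matrix n n ℝ} {s : Set α} (hA : ContinuousOn A s) (hdet : ∀ x ∈ s, (A x).det ≠ 0) :
    ContinuousOn (fun x ↦ (A x)⁻¹) s := by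
  simp only [inv_def, Ring.inverse_eq_inv']
  have hdetc : ContinuousOn (fun x ↦ (A x).det) s :=
    (continuous_id.matrix_det).comp_continuousOn hA
  have hadjc : ContinuousOn (fun x ↦ (A x).adjugate) s :=
    (continuous_id.matrix_adjugate).comp_continuousOn hA
  exact (hdetc.inv₀ hdet).smul hadjc

lemma intervalIntegrable_lagrangian {n : Type*} [Fintype n] [DecidableEq n] {t T : ℝ}
    {β w : ℝ → n → ℝ} {a : ℝ → Matrix n n ℝ} {c : ℝ → ℝ}
    (hβ : ContinuousOn β (uIcc t T)) (ha : ContinuousOn a (uIcc t T))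
    (hc : ContinuousOn c (uIcc t T)) (hdet : ∀ s ∈ uIcc t T, (a s).det ≠ 0)
    (hw : IntervalIntegrable w volume t T)
    (hww : IntervalIntegrable (fun s ↦ w s ⬝ᵥ w s) volume t T) :
    IntervalIntegrable (fun s ↦ lagrangian (β s) (a s) (c s) (w s)) volume t T := by
  have hq (i : n) : MemLp (fun s ↦ (w s - β s) i) 2 (volume.restrict (uIoc t T)) :=
    (memLp_two_apply_of_integrable_dotProduct_self hw.def'.aestronglyMeasurable hww.def' i).sub
      (memLp_restrict_uIoc_of_continuousOn ((continuous_apply i).comp_continuousOn hβ) 2)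
  have hinv (i j : n) : MemLp (fun s ↦ (a s)⁻¹ i j) ⊤ (volume.restrict (uIoc t T)) :=
    memLp_restrict_uIoc_of_continuousOn
      ((continuous_apply_apply i j).comp_continuousOn (continuousOn_matrix_inv ha hdet)) ⊤
  have hquad : IntervalIntegrable (fun s ↦ (w s - β s) ⬝ᵥ (a s)⁻¹ *ᵥ (w s - β s)) volume t T :=
    intervalIntegrable_iff.2 (integrable_dotProduct_mulVec hq hinv hq)
  exact (hquad.const_mul (1 / 2)).sub hc.intervalIntegrable

theorem stmt_4_general {d : ℕ} {t T : ℝ} (htT : t ≤ T) {β : ℝ → (Fin d → ℝ) → (Fin d → ℝ)}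
    {a : ℝ → (Fin d → ℝ) → Matrix (Fin d) (Fin d) ℝ} {c : ℝ → (Fin d → ℝ) → ℝ}
    (hβ : Continuous (Function.uncurry β)) (ha : Continuous (Function.uncurry a))
    (hc : Continuous (Function.uncurry c))
    (haPD : ∀ s y, (a s y).PosDef) {v : ℝ → (Fin d → ℝ) → ℝ} (hv : C1 v)
    (hsub : ∀ s ∈ Ioo t T, ∀ y,
      hamiltonian (β s y) (a s y) (c s y) (gradv (v s) y) ≤ deriv (fun r ↦ v r y) s)
    {φ φ' : ℝ → (Fin d → ℝ)} (hφ : ∀ s ∈ Icc t T, φ s = φ t + ∫ r in t..s, φ' r)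
    (hφ' : IntervalIntegrable φ' volume t T)
    (hφ'sq : IntervalIntegrable (fun s ↦ φ' s ⬝ᵥ φ' s) volume t T) :
    v t (φ t) ≤ (∫ s in t..T, lagrangian (β s (φ s)) (a s (φ s)) (c s (φ s)) (φ' s))
      + v T (φ T) := by
  rw [← uIcc_of_le htT] at hφ
  have hφac := absolutelyContinuousOnInterval_of_eq_add_integral hφ' hφ
  have hgraph : ContinuousOn (fun s ↦ (s, φ s)) (uIcc t T) :=
    continuousOn_id.prodMk hφac.continuousOn
  refine le_integral_add_of_ae_neg_deriv_le htT
    (hv.absolutelyContinuousOnInterval_comp_path hφac)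
    (intervalIntegrable_lagrangian (hβ.comp_continuousOn hgraph) (ha.comp_continuousOn hgraph)
      (hc.comp_continuousOn hgraph) (fun s _ ↦ (haPD s (φ s)).det_pos.ne') hφ' hφ'sq) ?_
  filter_upwards [ae_hasDerivAt_of_eq_add_integral hφ' hφ] with s hderiv hs
  rw [(hv.hasDerivAt_comp_path (hderiv hs)).deriv]
  have hduality := neg_dotProduct_le_lagrangian_add_hamiltonian (haPD s (φ s)) (β s (φ s))
    (c s (φ s)) (φ' s) (gradv (v s) (φ s))
  linarith [hsub s hs (φ s)]

/-- Verification inequality: a classical solution `v₀` of the limiting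
Hamilton–Jacobi equation bounds from below the cost of every absolutely continuous path
with square-integrable derivative. -/
theorem stmt_4 (d : ℕ) (T : ℝ) (hT : 0 < T) (t : ℝ) (x : Fin d → ℝ)
    (ht : 0 ≤ t) (htT : t ≤ T)
    (b : (Fin d → ℝ) → (Fin d → ℝ))
    (ubar : ℝ → (Fin d → ℝ) → (Fin d → ℝ))
    (σ : (Fin d → ℝ) → Matrix (Fin d) (Fin d) ℝ)
    (h : (Fin d → ℝ) → ℝ)
    (hb : Continuous b)
    (hubar : Continuous (fun p : ℝ × (Fin d → ℝ) => ubar p.1 p.2))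
    (hσ : Continuous σ)
    (haPD : ∀ y, (σ y * (σ y)ᵀ).PosDef)
    (v₀ : ℝ → (Fin d → ℝ) → ℝ)
    (hv₀reg : C12 v₀)
    (hv₀pde : ∀ s y, 0 ≤ s → s < T →
      deriv (fun r => v₀ r y) s
        + dotp (b y - (σ y) *ᵥ (ubar s y)) (gradv (v₀ s) y)
        - (1 / 2) * dotp ((σ y)ᵀ *ᵥ gradv (v₀ s) y) ((σ y)ᵀ *ᵥ gradv (v₀ s) y)
        - dotp (ubar s y) (ubar s y) = 0)
    (hv₀T : ∀ y, v₀ T y = 2 * h y)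
    (φ φ' : ℝ → (Fin d → ℝ))
    (hφt : φ t = x)
    (hAC : ∀ s ∈ Set.Icc t T, φ s = x + ∫ r in t..s, φ' r)
    (hL1 : IntervalIntegrable φ' MeasureTheory.volume t T)
    (hL2 : IntervalIntegrable (fun s => dotp (φ' s) (φ' s)) MeasureTheory.volume t T) :
    v₀ t x ≤
      (∫ s in t..T,
        ((1 / 2) * dotp (φ' s - (b (φ s) - (σ (φ s)) *ᵥ (ubar s (φ s))))
            ((σ (φ s) * (σ (φ s))ᵀ)⁻¹ *ᵥ (φ' s - (b (φ s) - (σ (φ s)) *ᵥ (ubar s (φ s)))))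
          - dotp (ubar s (φ s)) (ubar s (φ s))))
      + 2 * h (φ T) := by
  subst hφt
  rw [← hv₀T]
  refine stmt_4_general (β := fun s y ↦ b y - σ y *ᵥ ubar s y) (a := fun _ y ↦ σ y * (σ y)ᵀ)
    (c := fun s y ↦ ubar s y ⬝ᵥ ubar s y) htT
    ((hb.comp continuous_snd).sub ((hσ.comp continuous_snd).matrix_mulVec hubar))
    ((hσ.matrix_mul hσ.matrix_transpose).comp continuous_snd) (hubar.dotProduct hubar)
    (fun _ y ↦ haPD y) hv₀reg.c1 (fun s hs y ↦ ?_) hAC hL1 hL2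
  have hHJ := hv₀pde s y (ht.trans hs.1.le) hs.2
  simp only [dotp_eq_dotProduct] at hHJ
  rw [hamiltonian_mul_transpose]
  linarith
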